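/- Let 1 ≤ i ≤ n. The kernel of the map of left B-modules B² → B, (u, v) ↦ u b_i + v c_{i−1}, equals the set {(w c_i a_i, w a_{i−1} b_{i−1} + x c_{i−2}) : w, x ∈ B}; i.e., the complex B² → B² → B with first differential right multiplication by the 2×2 matrix with rows (c_i a_i, a_{i−1} b_{i−1}) and (0, c_{i−2}), and second differential (u, v) ↦ u b_i + v c_{i−1}, is exact at the middle B². -/

import Mathlib

noncomputable section

inductive Gen (n : ℕ) : Type
  | a : Fin (n+1) → Gen n
  | b : Fin (n+1) → Gen n
  | c : Fin (n+1) → Gen n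

variable (K : Type) [Field K] (n : ℕ)

/-- The tensor algebra `T(V)` on the span of the generators, i.e. the free algebra. -/
abbrev FA := FreeAlgebra K (Gen n)

/-- `a_i`, with the convention that out-of-range indices give `0`. -/
def ga (i : ℤ) : FA K n :=
  if h : 0 ≤ i ∧ i ≤ (n : ℤ) then FreeAlgebra.ι K (Gen.a ⟨i.toNat, by omega⟩) else 0

def gb (i : ℤ) : FA K n :=
  if h : 0 ≤ i ∧ i ≤ (n : ℤ) then FreeAlgebra.ι K (Gen.b ⟨i.toNat, by omega⟩) else 0

def gc (i : ℤ) : FA K n :=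
  if h : 0 ≤ i ∧ i ≤ (n : ℤ) then FreeAlgebra.ι K (Gen.c ⟨i.toNat, by omega⟩) else 0

/-- The set `R` of defining relations. -/
def rels : Set (FA K n) :=
  { x | x = ga K n n * gb K n n * gc K n n ∨ x = gc K n 0 * ga K n 0 ∨
      ∃ i : ℕ, i < n ∧
        (x = ga K n i * gb K n i * gc K n i + gc K n (i+1) * ga K n (i+1) * gb K n (i+1) ∨
         x = gb K n (i+1) * gc K n (i+1) * ga K n (i+1) ∨
         x = gc K n i * gc K n (i+1) ∨
         x = gb K n (i+1) * ga K n i) }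

/-- The relation whose ring-quotient is `B = T(V)/⟨R⟩`. -/
def BRel (x y : FA K n) : Prop := x ∈ rels K n ∧ y = 0

/-- The algebra `B = T(V)/⟨R⟩`. -/
abbrev B := RingQuot (BRel K n)

/-- The quotient map `π_B : T(V) → B`. -/
def πB : FA K n →ₐ[K] B K n := RingQuot.mkAlgHom K (BRel K n)

/-- The image of `a_i` in `B` (zero for out-of-range indices). -/
def aB (i : ℤ) : B K n := πB K n (ga K n i)
def bB (i : ℤ) : B K n := πB K n (gb K n i)
def cB (i : ℤ) : B K n := πB K n (gc K n i)

/-- The left annihilator of `x`, as a left ideal of `B`. -/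
def lann (x : B K n) : Ideal (B K n) where
  carrier := {w | w * x = 0}
  add_mem' := by
    intro a b ha hb
    simp only [Set.mem_setOf_eq, add_mul] at *
    rw [ha, hb, add_zero]
  zero_mem' := by simp
  smul_mem' := by
    intro c w hw
    simp only [Set.mem_setOf_eq, smul_eq_mul, mul_assoc] at *
    rw [hw, mul_zero]

end

/-!
In an algebra with generators `X` and relations `R` without constant term, every left-linear
relation `∑ uₓ x = 0` among the generators is a combination of the gradients `(rₓ)` of the relations
`r = ∑ rₓ x` in `R`. Indeed, for a module `N` with elements `ν x` satisfying `∑ rₓ ν x = 0` for all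
`r ∈ R`, the rule `x (m, k) = (x m + k ν x, 0)` makes `N × K` a module over the algebra, and
applying `∑ uₓ x = 0` to `(0, 1)` gives `∑ uₓ ν x = 0`.

For `B` only the coordinates at `b_i` and `c_{i-1}` matter, and only two defining relations have a
nonzero gradient there: `a_{i-1} b_{i-1} c_{i-1} + c_i a_i b_i`, with `(c_i a_i, a_{i-1} b_{i-1})`,
and, when `i ≥ 2`, `c_{i-2} c_{i-1}`, with `(0, c_{i-2})`.
-/

section FoxDerivative

variable {R X A N : Type*} [CommSemiring R] [Semiring A] [Algebra R A]
  [AddCommMonoid N] [Module R N] [Module A N] [IsScalarTower R A N]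

/-- The action of the free algebra on the extension `N × R` of the trivial module `R` by the module
`N`, in which a generator `x` acts by `(m, k) ↦ (π x • m + k • ν x, 0)`. -/
noncomputable def extensionAction (π : FreeAlgebra R X →ₐ[R] A) (ν : X → N) :
    FreeAlgebra R X →ₐ[R] Module.End R (N × R) :=
  FreeAlgebra.lift R fun x =>
    LinearMap.inl R N R ∘ₗ
      (Algebra.lsmul R R N (π (FreeAlgebra.ι R x))).coprod (LinearMap.toSpanSingleton R N (ν x))

/-- The Fox derivative along `π` with values `ν x` on the generators: the linear map which kills
scalars and sends `p * x` to `π p • ν x` for each generator `x`. It is read off from the action on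
`(0, 1)`, so that it descends to quotients of the free algebra as soon as the action does. -/
noncomputable def foxDerivative (π : FreeAlgebra R X →ₐ[R] A) (ν : X → N) :
    FreeAlgebra R X →ₗ[R] N :=
  LinearMap.fst R N R ∘ₗ LinearMap.applyₗ (0, 1) ∘ₗ (extensionAction π ν).toLinearMap

theorem extensionAction_ι (π : FreeAlgebra R X →ₐ[R] A) (ν : X → N) (x : X) (m : N) (k : R) :
    extensionAction π ν (FreeAlgebra.ι R x) (m, k) =
      (π (FreeAlgebra.ι R x) • m + k • ν x, 0) := by
  simp [extensionAction]

theorem extensionAction_apply_inl (π : FreeAlgebra R X →ₐ[R] A) (ν : X → N)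
    (t : FreeAlgebra R X) (m : N) : extensionAction π ν t (m, 0) = (π t • m, 0) := by
  induction t using FreeAlgebra.induction generalizing m with
  | grade0 r => simp [Module.algebraMap_end_apply]
  | grade1 x => simp [extensionAction_ι]
  | mul p q hp hq => simp [hp, hq, mul_smul]
  | add p q hp hq => simp [hp, hq, add_smul]

theorem snd_extensionAction_apply (π : FreeAlgebra R X →ₐ[R] A) (ν : X → N)
    (t : FreeAlgebra R X) (z : N × R) :
    (extensionAction π ν t z).2 = FreeAlgebra.algebraMapInv t * z.2 := by
  induction t using FreeAlgebra.induction generalizing z with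
  | grade0 r => simp [Module.algebraMap_end_apply, FreeAlgebra.algebraMapInv]
  | grade1 x => simp [extensionAction, FreeAlgebra.algebraMapInv]
  | mul p q hp hq => simp [hp, hq, mul_assoc]
  | add p q hp hq => simp [hp, hq, add_mul]

theorem extensionAction_apply (π : FreeAlgebra R X →ₐ[R] A) (ν : X → N) (t : FreeAlgebra R X)
    (m : N) (k : R) :
    extensionAction π ν t (m, k) =
      (π t • m + k • foxDerivative π ν t, FreeAlgebra.algebraMapInv t * k) := by
  have hsplit : (m, k) = (m, (0 : R)) + k • ((0 : N), (1 : R)) := by simp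
  refine Prod.ext ?_ (snd_extensionAction_apply π ν t _)
  rw [hsplit, map_add, map_smul, extensionAction_apply_inl]
  simp [foxDerivative]

theorem foxDerivative_mul_ι (π : FreeAlgebra R X →ₐ[R] A) (ν : X → N) (p : FreeAlgebra R X)
    (x : X) : foxDerivative π ν (p * FreeAlgebra.ι R x) = π p • ν x := by
  simp [foxDerivative, extensionAction_ι, extensionAction_apply_inl]

end FoxDerivative

theorem foxDerivative_eq_of_mkAlgHom_eq {R X N : Type*} [CommSemiring R]
    {rel : FreeAlgebra R X → FreeAlgebra R X → Prop}
    [AddCommMonoid N] [Module R N] [Module (RingQuot rel) N] [IsScalarTower R (RingQuot rel) N]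
    (ν : X → N)
    (haug : ∀ p q, rel p q → FreeAlgebra.algebraMapInv p = FreeAlgebra.algebraMapInv q)
    (hfox : ∀ p q, rel p q →
      foxDerivative (RingQuot.mkAlgHom R rel) ν p = foxDerivative (RingQuot.mkAlgHom R rel) ν q)
    {s t : FreeAlgebra R X} (hst : RingQuot.mkAlgHom R rel s = RingQuot.mkAlgHom R rel t) :
    foxDerivative (RingQuot.mkAlgHom R rel) ν s =
      foxDerivative (RingQuot.mkAlgHom R rel) ν t := by
  have hrel : ∀ ⦃p q⦄, rel p q → extensionAction (RingQuot.mkAlgHom R rel) ν p =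
      extensionAction (RingQuot.mkAlgHom R rel) ν q := fun p q h =>
    LinearMap.ext fun ⟨m, k⟩ => by
      rw [extensionAction_apply, extensionAction_apply, RingQuot.mkAlgHom_rel R h, haug p q h,
        hfox p q h]
  have hact : extensionAction (RingQuot.mkAlgHom R rel) ν s =
      extensionAction (RingQuot.mkAlgHom R rel) ν t := by
    rw [← RingQuot.liftAlgHom_mkAlgHom_apply R _ hrel s, hst,
      RingQuot.liftAlgHom_mkAlgHom_apply R _ hrel t]
  exact congrArg (fun f => (f (0, 1)).1) hact

section Relations

variable {K : Type} [Field K] {n : ℕ}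

theorem gc_eq_zero {j : ℤ} (hj : ¬ (0 ≤ j ∧ j ≤ n)) : gc K n j = 0 :=
  dif_neg hj

theorem πB_eq_zero_of_mem_rels {x : FA K n} (hx : x ∈ rels K n) : πB K n x = 0 :=
  (RingQuot.mkAlgHom_rel K (s := BRel K n) ⟨hx, rfl⟩).trans (map_zero _)

theorem aB_mul_bB_mul_cB_add {j : ℤ} (h0 : 0 ≤ j) (hn : j < n) :
    aB K n j * bB K n j * cB K n j +
      cB K n (j + 1) * aB K n (j + 1) * bB K n (j + 1) = 0 := by
  lift j to ℕ using h0
  simpa only [aB, bB, cB, map_add, map_mul] using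
    πB_eq_zero_of_mem_rels (K := K) (n := n) (.inr (.inr ⟨j, by omega, .inl rfl⟩))

theorem cB_mul_cB_add_one (j : ℤ) : cB K n j * cB K n (j + 1) = 0 := by
  by_cases hj : 0 ≤ j ∧ j < n
  · obtain ⟨h0, hn⟩ := hj
    lift j to ℕ using h0
    simpa only [cB, map_mul] using πB_eq_zero_of_mem_rels (K := K) (n := n)
      (.inr (.inr ⟨j, by omega, .inr (.inr (.inl rfl))⟩))
  · rw [cB, cB, ← map_mul]
    by_cases h0 : 0 ≤ j
    · rw [gc_eq_zero (j := j + 1) (by omega), mul_zero, map_zero]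
    · rw [gc_eq_zero (j := j) (by omega), zero_mul, map_zero]

theorem algebraMapInv_ga (j : ℤ) : FreeAlgebra.algebraMapInv (ga K n j) = 0 := by
  unfold ga
  split_ifs <;> simp [FreeAlgebra.algebraMapInv]

theorem algebraMapInv_gc (j : ℤ) : FreeAlgebra.algebraMapInv (gc K n j) = 0 := by
  unfold gc
  split_ifs <;> simp [FreeAlgebra.algebraMapInv]

theorem algebraMapInv_eq_zero_of_mem_rels {x : FA K n} (hx : x ∈ rels K n) :
    FreeAlgebra.algebraMapInv x = 0 := by
  rcases hx with rfl | rfl | ⟨j, -, rfl | rfl | rfl | rfl⟩ <;>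
    simp [algebraMapInv_ga, algebraMapInv_gc]

end Relations

section Syzygies

variable (K : Type) [Field K] (n : ℕ) (i : ℤ)

/-- The left submodule of `B²` generated by the rows `(c_i a_i, a_{i-1} b_{i-1})` and
`(0, c_{i-2})`, which are the coordinates at `(b_i, c_{i-1})` of gradients of defining relations. -/
def syzygies : Submodule (B K n) (B K n × B K n) :=
  Submodule.span (B K n)
    {(cB K n i * aB K n i, aB K n (i - 1) * bB K n (i - 1)), (0, cB K n (i - 2))}

/-- The images in `B² / syzygies` of the standard basis vectors, attached to the generators `b_i`
and `c_{i-1}`; all other generators are sent to `0`. -/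
def syzygyCoord : Gen n → (B K n × B K n) ⧸ syzygies K n i
  | .a _ => 0
  | .b k => if (k : ℤ) = i then (syzygies K n i).mkQ (1, 0) else 0
  | .c k => if (k : ℤ) = i - 1 then (syzygies K n i).mkQ (0, 1) else 0

variable {K n i}

theorem mem_syzygies_iff {u v : B K n} :
    (u, v) ∈ syzygies K n i ↔
      ∃ w x : B K n, u = w * (cB K n i * aB K n i) ∧
        v = w * (aB K n (i - 1) * bB K n (i - 1)) + x * cB K n (i - 2) := by
  simp [syzygies, Submodule.mem_span_pair, eq_comm]

theorem foxDerivative_mul_ga (p : FA K n) (j : ℤ) :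
    foxDerivative (πB K n) (syzygyCoord K n i) (p * ga K n j) = 0 := by
  unfold ga
  split_ifs
  · rw [foxDerivative_mul_ι, syzygyCoord, smul_zero]
  · rw [mul_zero, map_zero]

theorem foxDerivative_mul_gb (h0 : 0 ≤ i) (hn : i ≤ n) (p : FA K n) (j : ℤ) :
    foxDerivative (πB K n) (syzygyCoord K n i) (p * gb K n j) =
      if j = i then (syzygies K n i).mkQ (πB K n p, 0) else 0 := by
  unfold gb
  split_ifs with hj hji hji
  · simp [foxDerivative_mul_ι, syzygyCoord, hji, h0, ← Submodule.Quotient.mk_smul]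
  · simp [foxDerivative_mul_ι, syzygyCoord, hji, hj.1]
  · omega
  · rw [mul_zero, map_zero]

theorem foxDerivative_mul_gc (h1 : 1 ≤ i) (hn : i ≤ n) (p : FA K n) (j : ℤ) :
    foxDerivative (πB K n) (syzygyCoord K n i) (p * gc K n j) =
      if j = i - 1 then (syzygies K n i).mkQ (0, πB K n p) else 0 := by
  unfold gc
  split_ifs with hj hji hji
  · simp [foxDerivative_mul_ι, syzygyCoord, ← hji, hj.1, ← Submodule.Quotient.mk_smul]
  · simp [foxDerivative_mul_ι, syzygyCoord, hji, hj.1]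
  · omega
  · rw [mul_zero, map_zero]

theorem foxDerivative_eq_zero_of_mem_rels (h1 : 1 ≤ i) (hn : i ≤ n) {x : FA K n}
    (hx : x ∈ rels K n) : foxDerivative (πB K n) (syzygyCoord K n i) x = 0 := by
  have h0 : 0 ≤ i := by omega
  rcases hx with rfl | rfl | ⟨j, -, rfl | rfl | rfl | rfl⟩
  · rw [foxDerivative_mul_gc h1 hn, if_neg (by omega)]
  · exact foxDerivative_mul_ga _ _
  · rw [map_add, foxDerivative_mul_gc h1 hn, foxDerivative_mul_gb h0 hn]
    by_cases hj : (j : ℤ) + 1 = i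
    · subst hj
      rw [if_pos (by omega), if_pos rfl, ← map_add]
      refine (Submodule.Quotient.mk_eq_zero _).2 (Submodule.subset_span (.inl ?_))
      simp [aB, bB, cB]
    · rw [if_neg (by omega), if_neg hj, add_zero]
  · exact foxDerivative_mul_ga _ _
  · rw [foxDerivative_mul_gc h1 hn]
    split_ifs with hj
    · rw [show (j : ℤ) = i - 2 by omega]
      exact (Submodule.Quotient.mk_eq_zero _).2 (Submodule.subset_span (.inr rfl))
    · rfl
  · exact foxDerivative_mul_ga _ _

theorem mem_syzygies_of_mul_bB_add_mul_cB_eq_zero (h1 : 1 ≤ i) (hn : i ≤ n) {u v : B K n}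
    (huv : u * bB K n i + v * cB K n (i - 1) = 0) : (u, v) ∈ syzygies K n i := by
  obtain ⟨p, rfl⟩ : ∃ p, πB K n p = u := RingQuot.mkAlgHom_surjective K (BRel K n) u
  obtain ⟨q, rfl⟩ : ∃ q, πB K n q = v := RingQuot.mkAlgHom_surjective K (BRel K n) v
  have hker : πB K n (p * gb K n i + q * gc K n (i - 1)) = πB K n 0 := by
    rwa [map_add, map_mul, map_mul, map_zero]
  have hfox : foxDerivative (πB K n) (syzygyCoord K n i) (p * gb K n i + q * gc K n (i - 1)) =
      foxDerivative (πB K n) (syzygyCoord K n i) 0 := by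
    refine foxDerivative_eq_of_mkAlgHom_eq _ ?_ ?_ hker
    · rintro x _ ⟨hx, rfl⟩
      rw [algebraMapInv_eq_zero_of_mem_rels hx, map_zero]
    · rintro x _ ⟨hx, rfl⟩
      exact (foxDerivative_eq_zero_of_mem_rels h1 hn hx).trans (map_zero _).symm
  rw [map_add, foxDerivative_mul_gb (by omega) hn, foxDerivative_mul_gc h1 hn, if_pos rfl,
    if_pos rfl, ← map_add, map_zero, Prod.mk_add_mk, add_zero, zero_add] at hfox
  exact (Submodule.Quotient.mk_eq_zero _).1 hfox

theorem mul_bB_add_mul_cB_eq_zero_of_mem_syzygies (h1 : 1 ≤ i) (hn : i ≤ n) {u v : B K n}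
    (huv : (u, v) ∈ syzygies K n i) : u * bB K n i + v * cB K n (i - 1) = 0 := by
  obtain ⟨w, x, rfl, rfl⟩ := mem_syzygies_iff.1 huv
  have habc := aB_mul_bB_mul_cB_add (K := K) (n := n) (j := i - 1) (by omega) (by omega)
  have hcc := cB_mul_cB_add_one (K := K) (n := n) (i - 2)
  rw [sub_add_cancel] at habc
  rw [show i - 2 + 1 = i - 1 by ring] at hcc
  calc w * (cB K n i * aB K n i) * bB K n i +
        (w * (aB K n (i - 1) * bB K n (i - 1)) + x * cB K n (i - 2)) * cB K n (i - 1)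
      = w * (aB K n (i - 1) * bB K n (i - 1) * cB K n (i - 1) +
          cB K n i * aB K n i * bB K n i) + x * (cB K n (i - 2) * cB K n (i - 1)) := by
        noncomm_ring
    _ = 0 := by rw [habc, hcc, mul_zero, mul_zero, add_zero]

end Syzygies

/-- Lemma 3.3(2). For `1 ≤ i ≤ n`, the kernel of `(u,v) ↦ u b_i + v c_{i-1}`
is `{(w c_i a_i, w a_{i-1} b_{i-1} + x c_{i-2}) : w, x ∈ B}`. -/
theorem stmt_9 (K : Type) [Field K] (n : ℕ) (i : ℕ) (h1 : 1 ≤ i) (h2 : i ≤ n) :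
    ∀ u v : B K n,
      (u * bB K n i + v * cB K n ((i : ℤ) - 1) = 0) ↔
      (∃ w x : B K n,
        u = w * (cB K n i * aB K n i) ∧
        v = w * (aB K n ((i : ℤ) - 1) * bB K n ((i : ℤ) - 1)) + x * cB K n ((i : ℤ) - 2)) := by
  intro u v
  have h1' : (1 : ℤ) ≤ i := by exact_mod_cast h1
  have h2' : (i : ℤ) ≤ n := by exact_mod_cast h2
  rw [← mem_syzygies_iff]
  exact ⟨mem_syzygies_of_mul_bB_add_mul_cB_eq_zero h1' h2',
    mul_bB_add_mul_cB_eq_zero_of_mem_syzygies h1' h2'⟩
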